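/- arXiv:1811.06598 — 15 statements merged into one kernel-verified Lean document; each statement's English description precedes it below -/
import Mathlib

section
/- Let a, b, c be rational multiples of π with 0 < a, b, c ≤ π/2. If cos a · cos b = cos c, then either (a = π/2 and c = π/2), or (b = π/2 and c = π/2), or (a = π/4, b = π/4 and c = π/3). -/
open Real

theorem smith_two_pow {R : Type*} [CommRing R] [IsDomain R] (k : ℕ) :
    ∀ η : R, η ^ (2 ^ k) = 1 → η = 1 ∨ η = -1 ∨ η ^ 2 = -1 ∨ (1 - η) ^ 4 ∣ 2 := by
  induction k with
  | zero => intro η h; left; simpa using h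
  | succ k ih =>
    intro η h
    have h' : (η ^ 2) ^ (2 ^ k) = 1 := by rw [← pow_mul, ← h, pow_succ']
    rcases ih _ h' with h1 | h1 | h1 | h1
    · rcases (sq_eq_sq_iff_eq_or_eq_neg (a := η) (b := 1)).mp (by rw [h1, one_pow]) with h2 | h2
      · exact Or.inl h2
      · exact Or.inr (Or.inl h2)
    · exact Or.inr (Or.inr (Or.inl h1))
    · right; right; right
      have h4 : η ^ 4 = -1 := by rw [← h1]; ring
      have e1 : 1 + η = (1 - η) * (η + η ^ 2 + η ^ 3) := by linear_combination h4
      have e2 : 1 + η ^ 2 = (1 - η) * (1 + η) * η ^ 2 := by linear_combination h4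
      refine ⟨(η + η ^ 2 + η ^ 3) ^ 2 * η ^ 2, ?_⟩
      calc (2 : R) = (1 - η) * (1 + η) * (1 + η ^ 2) := by linear_combination h4
        _ = (1 - η) * (1 + η) * ((1 - η) * (1 + η) * η ^ 2) := by rw [← e2]
        _ = (1 - η) ^ 2 * (1 + η) ^ 2 * η ^ 2 := by ring
        _ = _ := by rw [e1]; ring
    · right; right; right
      refine dvd_trans (pow_dvd_pow_of_dvd ?_ 4) h1
      exact ⟨1 + η, by ring⟩

theorem smith_key {R : Type*} [CommRing R] [IsDomain R] (η : R) (n : ℕ) (hn : n ≠ 0)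
    (h : η ^ n = 1) (h1 : η ≠ 1) (h2 : η ≠ -1) :
    η ^ 2 = -1 ∨ ∃ m : ℕ, Odd m ∧ (1 - η) ^ 4 ∣ 2 * (m : R) := by
  obtain ⟨k, m, hm, rfl⟩ := Nat.exists_eq_two_pow_mul_odd hn
  by_cases hk : η ^ (2 ^ k) = 1
  · rcases smith_two_pow k η hk with h3 | h3 | h3 | h3
    · exact absurd h3 h1
    · exact absurd h3 h2
    · exact Or.inl h3
    · exact Or.inr ⟨1, odd_one, by simpa using h3⟩
  · right
    refine ⟨m ^ 4, hm.pow, ?_⟩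
    rw [Nat.cast_pow]
    refine dvd_mul_of_dvd_right (pow_dvd_pow_of_dvd ?_ 4) _
    set ω := η ^ (2 ^ k) with hω
    have hd : 1 - η ∣ 1 - ω := by simpa using sub_dvd_pow_sub_pow (1 : R) η (2 ^ k)
    refine hd.trans ?_
    have hωm : ω ^ m = 1 := by rw [hω, ← pow_mul]; exact h
    have hs : ∑ i ∈ Finset.range m, ω ^ i = 0 := by
      have := mul_neg_geom_sum ω m
      rw [hωm, sub_self] at this
      exact (mul_eq_zero.mp this).resolve_left (sub_ne_zero.mpr (Ne.symm hk))
    have : (m : R) = ∑ i ∈ Finset.range m, (1 - ω ^ i) := by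
      rw [Finset.sum_sub_distrib, hs]; simp
    rw [this]
    refine Finset.dvd_sum fun i _ => ?_
    simpa using sub_dvd_pow_sub_pow (1 : R) ω i

theorem smith_sq {R : Type*} [CommRing R] (η : R) (h : η ^ 2 = -1) :
    (1 - η) ^ 4 ∣ 4 * ((1 : ℕ) : R) := by
  refine ⟨-1, ?_⟩
  push_cast
  linear_combination (η ^ 2 - 4 * η + 5) * h

theorem smith_odd (m : ℕ) (hm : Odd m) : ¬ (2 : integralClosure ℤ ℂ) ∣ (m : integralClosure ℤ ℂ) := by
  rintro ⟨x, hx⟩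
  have hx' : (m : ℂ) = 2 * (x : ℂ) := by
    have := congrArg (algebraMap (integralClosure ℤ ℂ) ℂ) hx
    rw [map_mul, map_natCast, map_ofNat] at this
    exact this
  have hi : IsIntegral ℤ (algebraMap ℚ ℂ ((m : ℚ) / 2)) := by
    have : algebraMap ℚ ℂ ((m : ℚ) / 2) = (x : ℂ) := by
      simp [hx']
    rw [this]; exact x.2
  rw [isIntegral_algebraMap_iff (algebraMap ℚ ℂ).injective] at hi
  obtain ⟨y, hy⟩ := IsIntegrallyClosed.isIntegral_iff.mp hi
  have h3 : (2 * y : ℚ) = m := by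
    simp at hy; rw [hy]; ring
  have h4 : 2 * y = (m : ℤ) := by exact_mod_cast h3
  obtain ⟨t, rfl⟩ := hm
  omega

theorem smith_comb {R : Type*} [CommRing R] [IsDomain R] [CharZero R]
    (hodd : ∀ m : ℕ, Odd m → ¬ (2 : R) ∣ (m : R))
    (A B : R) (hAB : (2 : R) ∣ A * B) (m m' : ℕ) (hm : Odd m) (hm' : Odd m')
    (hA : A ^ 4 ∣ 2 * (m : R)) (hB : B ^ 4 ∣ 4 * (m' : R)) : False := by
  apply hodd (m * m') (hm.mul hm')
  have h1 : (2 : R) ^ 4 ∣ (A * B) ^ 4 := pow_dvd_pow_of_dvd hAB 4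
  rw [mul_pow] at h1
  obtain ⟨t, ht⟩ := h1.trans (mul_dvd_mul hA hB)
  refine ⟨t, ?_⟩
  apply mul_left_cancel₀ (show (8 : R) ≠ 0 by norm_num)
  push_cast
  linear_combination ht

theorem smith_root (a : ℝ) (ha : ∃ q : ℚ, a = q * π) :
    ∃ u : integralClosure ℤ ℂ, (u : ℂ) = Complex.exp (a * Complex.I) ∧
      ∃ n : ℕ, n ≠ 0 ∧ u ^ n = 1 := by
  obtain ⟨q, rfl⟩ := ha
  have key : Complex.exp (((q * π : ℝ) : ℂ) * Complex.I) ^ (2 * q.den) = 1 := by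
    rw [← Complex.exp_nat_mul, Complex.exp_eq_one_iff]
    refine ⟨q.num, ?_⟩
    have h : (q : ℂ) * q.den = q.num := by exact_mod_cast Rat.mul_den_eq_num q
    push_cast
    linear_combination (2 * π * Complex.I) * h
  have hn : 2 * q.den ≠ 0 := by simp
  refine ⟨⟨_, IsIntegral.of_pow (Nat.pos_of_ne_zero hn) (by rw [key]; exact isIntegral_one)⟩, rfl, 2 * q.den, hn, ?_⟩
  apply Subtype.ext
  simpa using key

theorem smith_angle (a : ℝ) (ha0 : 0 < a) (ha2 : a < π / 2)
    (u : integralClosure ℤ ℂ) (hu : (u : ℂ) = Complex.exp (a * Complex.I)) :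
    -u ^ 2 ≠ 1 ∧ -u ^ 2 ≠ -1 ∧ ((-u ^ 2) ^ 2 = -1 → a = π / 4) := by
  have hu2 : (u : ℂ) ^ 2 = Complex.exp ((2 * a : ℝ) * Complex.I) := by
    rw [hu, ← Complex.exp_nat_mul]; congr 1; push_cast; ring
  have hu4 : (u : ℂ) ^ 4 = Complex.exp ((4 * a : ℝ) * Complex.I) := by
    rw [hu, ← Complex.exp_nat_mul]; congr 1; push_cast; ring
  have c2 : ((u : ℂ) ^ 2).re = cos (2 * a) := by rw [hu2, Complex.exp_ofReal_mul_I_re]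
  have c4 : ((u : ℂ) ^ 4).re = cos (4 * a) := by rw [hu4, Complex.exp_ofReal_mul_I_re]
  have hc : 0 < cos a := cos_pos_of_mem_Ioo ⟨by linarith, ha2⟩
  have hs : 0 < sin a := sin_pos_of_pos_of_lt_pi ha0 (by linarith)
  have hsc := sin_sq_add_cos_sq a
  refine ⟨fun h => ?_, fun h => ?_, fun h => ?_⟩
  · have h' : (u : ℂ) ^ 2 = -1 := by
      have := congrArg Subtype.val h
      simp at this
      linear_combination -this
    rw [h', cos_two_mul] at c2
    simp at c2
    nlinarith
  · have h' : (u : ℂ) ^ 2 = 1 := by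
      have := congrArg Subtype.val (neg_injective h)
      exact this
    rw [h', cos_two_mul] at c2
    simp at c2
    nlinarith
  · have h' : (u : ℂ) ^ 4 = -1 := by
      have := congrArg Subtype.val h
      simp at this
      linear_combination this
    rw [h', show 4 * a = 2 * (2 * a) by ring, cos_two_mul] at c4
    simp at c4
    have h0 : cos (2 * a) = cos (π / 2) := by rw [cos_pi_div_two]; exact pow_eq_zero_iff (two_ne_zero) |>.mp (by linarith)
    have := injOn_cos ⟨by linarith, by linarith⟩ ⟨by linarith, by linarith⟩ h0
    linarith

theorem smith_spherical_pythagorean_triples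
    (a b c : ℝ)
    (ha : ∃ q : ℚ, a = q * π) (hb : ∃ q : ℚ, b = q * π) (hc : ∃ q : ℚ, c = q * π)
    (ha0 : 0 < a) (hb0 : 0 < b) (hc0 : 0 < c)
    (ha2 : a ≤ π / 2) (hb2 : b ≤ π / 2) (hc2 : c ≤ π / 2)
    (heq : Real.cos a * Real.cos b = Real.cos c) :
    (a = π / 2 ∧ c = π / 2) ∨ (b = π / 2 ∧ c = π / 2) ∨
      (a = π / 4 ∧ b = π / 4 ∧ c = π / 3) := by
  have hpi := pi_pos
  have hcc : cos c = 0 → c = π / 2 := fun h =>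
    injOn_cos ⟨by linarith, by linarith⟩ ⟨by linarith, by linarith⟩ (by rw [h, cos_pi_div_two])
  rcases ha2.eq_or_lt with ha3 | ha3
  · left; refine ⟨ha3, hcc ?_⟩
    rw [← heq, ha3]; simp
  rcases hb2.eq_or_lt with hb3 | hb3
  · right; left; refine ⟨hb3, hcc ?_⟩
    rw [← heq, hb3]; simp
  right; right
  obtain ⟨u, hu, n, hn, hun⟩ := smith_root a ha
  obtain ⟨v, hv, n', hn', hvn⟩ := smith_root b hb
  obtain ⟨w, hw, -⟩ := smith_root c hc
  obtain ⟨w', hw', -⟩ := smith_root (-c) (by obtain ⟨q, rfl⟩ := hc; exact ⟨-q, by push_cast; ring⟩)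
  obtain ⟨p1, p2, p3⟩ := smith_angle a ha0 ha3 u hu
  obtain ⟨q1, q2, q3⟩ := smith_angle b hb0 hb3 v hv
  have hdvd : (2 : integralClosure ℤ ℂ) ∣ (1 - -u ^ 2) * (1 - -v ^ 2) := by
    refine ⟨(w + w') * (u * v), ?_⟩
    have e (x : ℝ) (z : ℂ) (hz : z = Complex.exp (x * Complex.I)) : 1 + z ^ 2 = 2 * (cos x : ℝ) * z := by
      rw [hz, Complex.exp_mul_I, ← Complex.ofReal_cos, ← Complex.ofReal_sin]
      have : ((sin x : ℝ) : ℂ) ^ 2 + ((cos x : ℝ) : ℂ) ^ 2 = 1 := by exact_mod_cast sin_sq_add_cos_sq x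
      linear_combination ((sin x : ℝ) : ℂ) ^ 2 * Complex.I_sq - this
    have e3 : (w : ℂ) + w' = 2 * (cos c : ℝ) := by
      rw [hw, hw', Complex.ofReal_cos, Complex.cos]; push_cast; ring_nf
    have h : ((cos a : ℝ) : ℂ) * (cos b : ℝ) = (cos c : ℝ) := by exact_mod_cast heq
    have g : (1 + (u : ℂ) ^ 2) * (1 + (v : ℂ) ^ 2) = 2 * ((w + w') * (u * v)) := by
      rw [e a u hu, e b v hv, e3]; linear_combination 4 * (u : ℂ) * v * h
    apply FaithfulSMul.algebraMap_injective (integralClosure ℤ ℂ) ℂ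
    simp only [map_mul, map_sub, map_add, map_neg, map_pow, map_one, map_ofNat, sub_neg_eq_add]
    exact g
  have hA := smith_key (-u ^ 2) (2 * n) (by simpa using hn)
    (by rw [pow_mul, show (-u ^ 2) ^ 2 = u ^ 4 by ring, ← pow_mul, mul_comm, pow_mul, hun, one_pow]) p1 p2
  have hB := smith_key (-v ^ 2) (2 * n') (by simpa using hn')
    (by rw [pow_mul, show (-v ^ 2) ^ 2 = v ^ 4 by ring, ← pow_mul, mul_comm, pow_mul, hvn, one_pow]) q1 q2
  have up {A : integralClosure ℤ ℂ} {m : ℕ} (h : A ∣ 2 * (m : integralClosure ℤ ℂ)) :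
      A ∣ 4 * (m : integralClosure ℤ ℂ) := by
    refine h.trans ⟨2, by ring⟩
  rcases hA with hA | ⟨m, hm, hA⟩
  · rcases hB with hB | ⟨m', hm', hB⟩
    · have h1 := p3 hA
      have h2 := q3 hB
      refine ⟨h1, h2, ?_⟩
      refine injOn_cos ⟨by linarith, by linarith⟩ ⟨by linarith, by linarith⟩ ?_
      rw [← heq, h1, h2, cos_pi_div_four, cos_pi_div_three]
      have := Real.mul_self_sqrt (show (0 : ℝ) ≤ 2 by norm_num)
      linarith
    · rw [mul_comm] at hdvd
      exact (smith_comb smith_odd _ _ hdvd m' 1 hm' odd_one hB (smith_sq _ hA)).elim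
  · rcases hB with hB | ⟨m', hm', hB⟩
    · exact (smith_comb smith_odd _ _ hdvd m 1 hm odd_one hA (smith_sq _ hB)).elim
    · exact (smith_comb smith_odd _ _ hdvd m m' hm hm' hA (up hB)).elim
end

section
/- cos(π/7) − cos(2π/7) + cos(3π/7) = 1/2. -/
open Real

theorem conway_jones_item4 :
    Real.cos (π / 7) - Real.cos (2 * π / 7) + Real.cos (3 * π / 7) = 1 / 2 := by
  have h2 : Real.cos (2 * π / 7) = 2 * Real.cos (π / 7) ^ 2 - 1 := by
    rw [← Real.cos_two_mul]; congr 1; ring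
  have h3 : Real.cos (3 * π / 7) = 4 * Real.cos (π / 7) ^ 3 - 3 * Real.cos (π / 7) := by
    rw [← Real.cos_three_mul]; congr 1; ring
  have h4 : Real.cos (3 * π / 7) = -(2 * Real.cos (2 * π / 7) ^ 2 - 1) := by
    rw [← Real.cos_two_mul, ← Real.cos_pi_sub]; congr 1; ring
  have hc : 0 < Real.cos (π / 7) := by
    apply Real.cos_pos_of_mem_Ioo
    constructor <;> linarith [Real.pi_pos]
  rw [h3, h2] at h4
  rw [h2, h3]
  generalize Real.cos (π / 7) = c at *
  have h : (c + 1) * (8 * c ^ 3 - 4 * c ^ 2 - 4 * c + 1) = 0 := by linear_combination h4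
  rcases mul_eq_zero.mp h with h | h
  · linarith
  · linarith
end

section
/- cos(π/5) − cos(π/15) + cos(4π/15) = 1/2. -/
open Real

theorem conway_jones_item5 :
    Real.cos (π / 5) - Real.cos (π / 15) + Real.cos (4 * π / 15) = 1 / 2 := by
  have h1 := Real.cos_sub_cos (4 * π / 15) (π / 15)
  rw [show (4 * π / 15 + π / 15) / 2 = π / 6 by ring,
    show (4 * π / 15 - π / 15) / 2 = π / 2 - 2 * (π / 5) by ring,
    Real.sin_pi_div_six, Real.sin_pi_div_two_sub, Real.cos_two_mul,
    Real.cos_pi_div_five] at h1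
  rw [Real.cos_pi_div_five]
  have h5 : √(5 : ℝ) ^ 2 = 5 := Real.sq_sqrt (by norm_num)
  linarith
end

section
/- −cos(2π/5) + cos(2π/15) − cos(7π/15) = 1/2. -/
open Real

theorem conway_jones_item6 :
    -Real.cos (2 * π / 5) + Real.cos (2 * π / 15) - Real.cos (7 * π / 15) = 1 / 2 := by
  have h1 : Real.cos (2 * π / 15) = Real.cos (π / 3 - π / 5) := by congr 1; ring
  have h2 : Real.cos (7 * π / 15) = -Real.cos (π / 3 + π / 5) := by
    rw [← Real.cos_pi_sub]; congr 1; ring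
  have h3 : Real.cos (2 * π / 5) = 2 * Real.cos (π / 5) ^ 2 - 1 := by
    rw [← Real.cos_two_mul]; congr 1; ring
  have h5 : (√5 : ℝ) ^ 2 = 5 := Real.sq_sqrt (by norm_num)
  rw [h1, h2, h3, Real.cos_sub, Real.cos_add, Real.cos_pi_div_three, Real.cos_pi_div_five]
  linear_combination (-1 / 8) * h5
end

section
/- cos(π/7) + cos(3π/7) − cos(π/21) + cos(8π/21) = 1/2. -/
open Real

theorem conway_jones_item7 :
    Real.cos (π / 7) + Real.cos (3 * π / 7) - Real.cos (π / 21) + Real.cos (8 * π / 21)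
      = 1 / 2 := by
  have h1 : Real.cos (π / 21) = Real.cos (5 * (π / 7) - (π - π / 3)) := by
    congr 1; ring
  have h2 : Real.cos (8 * π / 21) = Real.cos (5 * (π / 7) - π / 3) := by
    congr 1; ring
  have h3 : Real.cos (3 * π / 7) = Real.cos (3 * (π / 7)) := by
    congr 1; ring
  have h6 : Real.sin (6 * (π / 7)) = Real.sin (π / 7) := by
    rw [← Real.sin_pi_sub]; congr 1; ring
  rw [h1, h2, h3, Real.cos_sub _ (π - π / 3), Real.cos_pi_sub, Real.cos_sub _ (π / 3), Real.sin_pi_sub, Real.cos_pi_div_three]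
  have hs : 0 < Real.sin (π / 7) :=
    Real.sin_pos_of_pos_of_lt_pi (by positivity) (by linarith [Real.pi_pos])
  generalize π / 7 = t at *
  have e1 : Real.sin (2 * t) = 2 * Real.sin t * Real.cos t := Real.sin_two_mul t
  have e2 : Real.sin (4 * t) - Real.sin (2 * t) = 2 * Real.sin t * Real.cos (3 * t) := by
    rw [Real.sin_sub_sin, show (4 * t - 2 * t) / 2 = t by ring, show (4 * t + 2 * t) / 2 = 3 * t by ring]
  have e3 : Real.sin (6 * t) - Real.sin (4 * t) = 2 * Real.sin t * Real.cos (5 * t) := by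
    rw [Real.sin_sub_sin, show (6 * t - 4 * t) / 2 = t by ring, show (6 * t + 4 * t) / 2 = 5 * t by ring]
  apply mul_left_cancel₀ hs.ne'
  linear_combination (h6 - e1 - e2 - e3) / 2
end

section
/- cos(π/7) − cos(2π/7) + cos(2π/21) − cos(5π/21) = 1/2. -/
open Real

theorem conway_jones_item8 :
    Real.cos (π / 7) - Real.cos (2 * π / 7) + Real.cos (2 * π / 21) - Real.cos (5 * π / 21)
      = 1 / 2 := by
  have h1 : Real.cos (5 * π / 21) + Real.cos (3 * (π / 7)) = Real.cos (2 * π / 21) := by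
    have e1 : 5 * π / 21 = π / 3 - 2 * π / 21 := by ring
    have e2 : 3 * (π / 7) = π / 3 + 2 * π / 21 := by ring
    rw [e1, e2, Real.cos_sub, Real.cos_add, Real.cos_pi_div_three]
    ring
  have e3 : 2 * π / 7 = 2 * (π / 7) := by ring
  have h2 : Real.sin (2 * (2 * (π / 7))) = Real.sin (3 * (π / 7)) := by
    rw [← Real.sin_pi_sub]
    congr 1
    ring
  have hs : 0 < Real.sin (π / 7) :=
    Real.sin_pos_of_pos_of_lt_pi (by positivity) (by linarith [Real.pi_pos])
  rw [Real.sin_two_mul, Real.sin_two_mul, Real.cos_two_mul, Real.sin_three_mul] at h2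
  rw [← h1, e3, Real.cos_two_mul, Real.cos_three_mul]
  have h3 := Real.sin_sq_add_cos_sq (π / 7)
  apply mul_left_cancel₀ hs.ne'
  linear_combination h2 / 2 - 2 * Real.sin (π / 7) * h3
end

section
/- −cos(2π/7) + cos(3π/7) + cos(4π/21) + cos(10π/21) = 1/2. -/
open Real

theorem conway_jones_item9 :
    -Real.cos (2 * π / 7) + Real.cos (3 * π / 7) + Real.cos (4 * π / 21)
      + Real.cos (10 * π / 21) = 1 / 2 := by
  have e1 : Real.cos (4 * π / 21) + Real.cos (10 * π / 21) = Real.cos (π / 7) := by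
    rw [show 4 * π / 21 = π / 3 - π / 7 by ring, show 10 * π / 21 = π / 3 + π / 7 by ring,
      Real.cos_sub, Real.cos_add, Real.cos_pi_div_three]
    ring
  have h2 : Real.cos (2 * π / 7) = 2 * Real.cos (π / 7) ^ 2 - 1 := by
    rw [← Real.cos_two_mul]; congr 1; ring
  have h3 : Real.cos (3 * π / 7) = 4 * Real.cos (π / 7) ^ 3 - 3 * Real.cos (π / 7) := by
    rw [← Real.cos_three_mul]; congr 1; ring
  have h4 : -Real.cos (3 * π / 7) = 2 * Real.cos (2 * π / 7) ^ 2 - 1 := by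
    rw [← Real.cos_two_mul, ← Real.cos_pi_sub]; congr 1; ring
  have hpos : 0 < Real.cos (π / 7) :=
    Real.cos_pos_of_mem_Ioo ⟨by linarith [Real.pi_pos], by linarith [Real.pi_pos]⟩
  rw [h3, h2] at h4
  have key : 8 * Real.cos (π / 7) ^ 3 - 4 * Real.cos (π / 7) ^ 2 - 4 * Real.cos (π / 7) + 1 = 0 := by
    have hne : Real.cos (π / 7) + 1 ≠ 0 := by linarith
    apply mul_left_cancel₀ hne
    linear_combination -h4
  linear_combination e1 - h2 + h3 + key / 2
end

section
/- −cos(π/15) + cos(2π/15) + cos(4π/15) − cos(7π/15) = 1/2. -/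
open Real

theorem conway_jones_item10 :
    -Real.cos (π / 15) + Real.cos (2 * π / 15) + Real.cos (4 * π / 15)
      - Real.cos (7 * π / 15) = 1 / 2 := by
  have key : ∀ x : ℝ, Real.cos (π / 3 + x) + Real.cos (π / 3 - x) = Real.cos x := by
    intro x
    rw [Real.cos_add, Real.cos_sub, Real.cos_pi_div_three]
    ring
  have h1 := key (2 * π / 15)
  have h2 := key (π / 15)
  rw [show π / 3 + 2 * π / 15 = 7 * π / 15 by ring,
    show π / 3 - 2 * π / 15 = π / 5 by ring] at h1
  rw [show π / 3 + π / 15 = 2 * (π / 5) by ring,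
    show π / 3 - π / 15 = 4 * π / 15 by ring, Real.cos_two_mul] at h2
  rw [Real.cos_pi_div_five] at h1 h2
  have h5 : (√5 : ℝ) ^ 2 = 5 := Real.sq_sqrt (by norm_num)
  nlinarith
end

section
/- For every real number t with 0 < t < π/6, the 4×4 real symmetric matrix G with rows (1, −cos r, −cos p, −cos q), (−cos r, 1, −cos q, −cos p), (−cos p, −cos q, 1, −cos s), (−cos q, −cos p, −cos s, 1), where p = π/4 + t/2, q = π/4 − t/2, r = 2π/3 + t, s = 2π/3 − t, is positive definite. -/
open Real

lemma aux_quad (A B C u v : ℝ) (hA : 0 < A) (h : B ^ 2 < A * C) (hn : u ≠ 0 ∨ v ≠ 0) :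
    0 < A * u ^ 2 - 2 * B * u * v + C * v ^ 2 := by
  have key : A * (A * u ^ 2 - 2 * B * u * v + C * v ^ 2)
      = (A * u - B * v) ^ 2 + (A * C - B ^ 2) * v ^ 2 := by ring
  refine pos_of_mul_pos_right (a := A) ?_ hA.le
  rw [key]
  by_cases hv : v = 0
  · subst hv
    have hu : u ≠ 0 := by simpa using hn
    have : 0 < (A * u) ^ 2 := by positivity
    simpa using this
  · have : 0 < (A * C - B ^ 2) * v ^ 2 := mul_pos (by linarith) (by positivity)
    nlinarith [sq_nonneg (A * u - B * v)]

lemma aux_quad0 (A B C u v : ℝ) (hA : 0 < A) (h : B ^ 2 < A * C) :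
    0 ≤ A * u ^ 2 - 2 * B * u * v + C * v ^ 2 := by
  by_cases hn : u ≠ 0 ∨ v ≠ 0
  · exact (aux_quad A B C u v hA h hn).le
  · push Not at hn
    simp [hn.1, hn.2]

lemma aux_form (P Q a b : ℝ) (h1 : 0 < 1 - a) (h2 : 0 < 1 + a)
    (h3 : (P + Q) ^ 2 < (1 - a) * (1 - b)) (h4 : (P - Q) ^ 2 < (1 + a) * (1 + b)) :
    Matrix.PosDef
      !![1, -a, -P, -Q; -a, 1, -Q, -P; -P, -Q, 1, -b; -Q, -P, -b, (1 : ℝ)] := by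
  refine Matrix.PosDef.of_dotProduct_mulVec_pos ?_ ?_
  · ext i j
    fin_cases i <;> fin_cases j <;> simp
  · intro x hx
    have e : star x ⬝ᵥ (!![1, -a, -P, -Q; -a, 1, -Q, -P; -P, -Q, 1, -b; -Q, -P, -b, (1 : ℝ)].mulVec x)
      = ((1 - a) * (x 0 + x 1) ^ 2 - 2 * (P + Q) * (x 0 + x 1) * (x 2 + x 3)
          + (1 - b) * (x 2 + x 3) ^ 2) / 2
        + ((1 + a) * (x 0 - x 1) ^ 2 - 2 * (P - Q) * (x 0 - x 1) * (x 2 - x 3)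
          + (1 + b) * (x 2 - x 3) ^ 2) / 2 := by
      simp [Matrix.mulVec, dotProduct, Fin.sum_univ_four]
      ring
    rw [e]
    have n1 := aux_quad0 _ _ _ (x 0 + x 1) (x 2 + x 3) h1 h3
    have n2 := aux_quad0 _ _ _ (x 0 - x 1) (x 2 - x 3) h2 h4
    by_cases c1 : x 0 + x 1 ≠ 0 ∨ x 2 + x 3 ≠ 0
    · have := aux_quad _ _ _ _ _ h1 h3 c1
      linarith
    by_cases c2 : x 0 - x 1 ≠ 0 ∨ x 2 - x 3 ≠ 0
    · have := aux_quad _ _ _ _ _ h2 h4 c2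
      linarith
    exfalso
    push Not at c1 c2
    apply hx
    ext i
    fin_cases i <;> simp <;> linarith [c1.1, c1.2, c2.1, c2.2]

theorem gram_matrix_family_11_posDef (t : ℝ) (ht0 : 0 < t) (ht : t < π / 6) :
    let p : ℝ := π / 4 + t / 2
    let q : ℝ := π / 4 - t / 2
    let r : ℝ := 2 * π / 3 + t
    let s : ℝ := 2 * π / 3 - t
    Matrix.PosDef
      !![1, -Real.cos r, -Real.cos p, -Real.cos q;
         -Real.cos r, 1, -Real.cos q, -Real.cos p;
         -Real.cos p, -Real.cos q, 1, -Real.cos s;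
         -Real.cos q, -Real.cos p, -Real.cos s, (1 : ℝ)] := by
  intro p q r s
  have hpi := Real.pi_pos
  have hc : √3 / 2 < cos t := by
    rw [← Real.cos_pi_div_six]
    exact Real.cos_lt_cos_of_nonneg_of_le_pi ht0.le (by linarith) ht
  have h3 : √3 ^ 2 = 3 := Real.sq_sqrt (by norm_num)
  have h2 : √2 ^ 2 = 2 := Real.sq_sqrt (by norm_num)
  have hc2 : 3 / 4 < cos t ^ 2 := by nlinarith [Real.sqrt_nonneg 3]
  have hcp : 0 < cos t := lt_of_le_of_lt (by positivity) hc
  have hsc := Real.sin_sq_add_cos_sq t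
  have hsh := Real.sin_sq_add_cos_sq (t / 2)
  have hd : cos t = 2 * cos (t / 2) ^ 2 - 1 := by
    rw [← Real.cos_two_mul]; congr 1; ring
  have e1 : cos (2 * π / 3) = -(1 / 2) := by
    rw [show 2 * π / 3 = π - π / 3 by ring, Real.cos_pi_sub, Real.cos_pi_div_three]
  have e2 : sin (2 * π / 3) = √3 / 2 := by
    rw [show 2 * π / 3 = π - π / 3 by ring, Real.sin_pi_sub, Real.sin_pi_div_three]
  have hr : cos r = -(1 / 2) * cos t - √3 / 2 * sin t := by
    rw [Real.cos_add, e1, e2]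
  have hs : cos s = -(1 / 2) * cos t + √3 / 2 * sin t := by
    rw [Real.cos_sub, e1, e2]
  have hp : cos p = √2 / 2 * cos (t / 2) - √2 / 2 * sin (t / 2) := by
    rw [Real.cos_add, Real.cos_pi_div_four, Real.sin_pi_div_four]
  have hq : cos q = √2 / 2 * cos (t / 2) + √2 / 2 * sin (t / 2) := by
    rw [Real.cos_sub, Real.cos_pi_div_four, Real.sin_pi_div_four]
  have hsum : cos r + cos s = - cos t := by rw [hr, hs]; ring
  have hprod : cos r * cos s = cos t ^ 2 - 3 / 4 := by
    rw [hr, hs]; linear_combination (-(sin t ^ 2) / 4) * h3 - 3 / 4 * hsc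
  have hP : (cos p + cos q) ^ 2 = 1 + cos t := by
    rw [hp, hq, hd]; linear_combination cos (t / 2) ^ 2 * h2
  have hM : (cos p - cos q) ^ 2 = 1 - cos t := by
    rw [hp, hq, hd]; linear_combination sin (t / 2) ^ 2 * h2 + 2 * hsh
  have b1 : (cos p + cos q) ^ 2 < (1 - cos r) * (1 - cos s) := by nlinarith
  have b2 : (cos p - cos q) ^ 2 < (1 + cos r) * (1 + cos s) := by nlinarith
  have d1 : 0 < 1 - cos r := by
    refine lt_of_le_of_ne (by linarith [Real.cos_le_one r]) ?_
    intro h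
    rw [← h] at b1
    nlinarith [sq_nonneg (cos p + cos q)]
  have d2 : 0 < 1 + cos r := by
    refine lt_of_le_of_ne (by linarith [Real.neg_one_le_cos r]) ?_
    intro h
    rw [← h] at b2
    nlinarith [sq_nonneg (cos p - cos q)]
  exact aux_form _ _ _ _ d1 d2 b1 b2
end

section
/- cos(25π/42)·cos(11π/42) + cos(3π/7)·cos(π/7) = 0. -/
open Real

theorem two_sin_cos_aux (a b : ℝ) :
    2 * Real.sin a * Real.cos b = Real.sin (b + a) - Real.sin (b - a) := by
  rw [Real.sin_add, Real.sin_sub]; ring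

theorem two_cos_cos_aux (a b : ℝ) :
    2 * (Real.cos a * Real.cos b) = Real.cos (a + b) + Real.cos (a - b) := by
  rw [Real.cos_add, Real.cos_sub]; ring

theorem sporadic_quadruple_2 :
    Real.cos (25 * π / 42) * Real.cos (11 * π / 42)
      + Real.cos (3 * π / 7) * Real.cos (π / 7) = 0 := by
  have hs : 0 < Real.sin (π / 7) :=
    Real.sin_pos_of_pos_of_lt_pi (by positivity) (by linarith [Real.pi_pos])
  have h1 := two_cos_cos_aux (25 * π / 42) (11 * π / 42)
  have h2 := two_cos_cos_aux (3 * π / 7) (π / 7)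
  rw [show 25 * π / 42 + 11 * π / 42 = 6 * π / 7 by ring,
    show 25 * π / 42 - 11 * π / 42 = π / 3 by ring, Real.cos_pi_div_three] at h1
  rw [show 3 * π / 7 + π / 7 = 4 * π / 7 by ring,
    show 3 * π / 7 - π / 7 = 2 * π / 7 by ring] at h2
  have e1 := two_sin_cos_aux (π / 7) (2 * π / 7)
  have e2 := two_sin_cos_aux (π / 7) (4 * π / 7)
  have e3 := two_sin_cos_aux (π / 7) (6 * π / 7)
  rw [show 2 * π / 7 + π / 7 = 3 * π / 7 by ring,
    show 2 * π / 7 - π / 7 = π / 7 by ring] at e1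
  rw [show 4 * π / 7 + π / 7 = 5 * π / 7 by ring,
    show 4 * π / 7 - π / 7 = 3 * π / 7 by ring] at e2
  rw [show 6 * π / 7 + π / 7 = π by ring,
    show 6 * π / 7 - π / 7 = 5 * π / 7 by ring, Real.sin_pi] at e3
  have key : Real.sin (π / 7) * (2 * (Real.cos (2 * π / 7) + Real.cos (4 * π / 7)
      + Real.cos (6 * π / 7)) + 1) = 0 := by linarith
  have := (mul_eq_zero.mp key).resolve_left hs.ne'
  linarith
end

section
/- The 4×4 real symmetric matrix G with rows (1, −cos r, −cos p, −cos q), (−cos r, 1, −cos q, −cos p), (−cos p, −cos q, 1, −cos s), (−cos q, −cos p, −cos s, 1), where p = 2π/3, q = π/3, r = 3π/5, s = π/5, is positive definite. -/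
open Real

theorem form_pos_aux (c x y z w : ℝ) (h0 : 0 < c) (h1 : c < 1) (hc : 4 * c ^ 2 - 2 * c - 1 = 0)
    (hQ : x ^ 2 + y ^ 2 + z ^ 2 + w ^ 2 + 2 * (c - 1 / 2) * x * y + x * z - x * w - y * z + y * w
      - 2 * c * z * w ≤ 0) : x = 0 ∧ y = 0 ∧ z = 0 ∧ w = 0 := by
  have key : 2 * (1 + c) * (x ^ 2 + y ^ 2 + z ^ 2 + w ^ 2 + 2 * (c - 1 / 2) * x * y + x * z - x * w
      - y * z + y * w - 2 * c * z * w) =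
      (1 + c) * (1 / 2 + c) * (x + y) ^ 2 + (1 + c) * (1 - c) * (z + w) ^ 2
      + ((1 + c) * (z - w) + (x - y)) ^ 2 + (x - y) ^ 2 / 4 := by
    linear_combination (-(x - y) ^ 2 / 4) * hc
  have hle : 2 * (1 + c) * (x ^ 2 + y ^ 2 + z ^ 2 + w ^ 2 + 2 * (c - 1 / 2) * x * y + x * z - x * w
      - y * z + y * w - 2 * c * z * w) ≤ 0 :=
    mul_nonpos_of_nonneg_of_nonpos (by positivity) hQ
  rw [key] at hle
  have p1 : 0 < (1 + c) * (1 / 2 + c) := by positivity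
  have p2 : 0 < (1 + c) * (1 - c) := mul_pos (by linarith) (by linarith)
  have n1 := mul_nonneg p1.le (sq_nonneg (x + y))
  have n2 := mul_nonneg p2.le (sq_nonneg (z + w))
  have n3 := sq_nonneg ((1 + c) * (z - w) + (x - y))
  have n4 := sq_nonneg (x - y)
  have e1 : (1 + c) * (1 / 2 + c) * (x + y) ^ 2 = 0 := by linarith
  have e2 : (1 + c) * (1 - c) * (z + w) ^ 2 = 0 := by linarith
  have e3 : ((1 + c) * (z - w) + (x - y)) ^ 2 = 0 := by linarith
  have e4 : (x - y) ^ 2 = 0 := by linarith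
  have f1 : x + y = 0 := by simpa [p1.ne'] using (mul_eq_zero.1 e1).resolve_left p1.ne'
  have f2 : z + w = 0 := by simpa using (mul_eq_zero.1 e2).resolve_left p2.ne'
  have f3 : (1 + c) * (z - w) + (x - y) = 0 := by simpa using e3
  have f4 : x - y = 0 := pow_eq_zero_iff (two_ne_zero) |>.1 e4
  rw [f4, add_zero] at f3
  have f5 : z - w = 0 := (mul_eq_zero.1 f3).resolve_left (by linarith)
  refine ⟨?_, ?_, ?_, ?_⟩ <;> linarith

theorem gram_matrix_sporadic_1_posDef :
    let p : ℝ := 2 * π / 3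
    let q : ℝ := π / 3
    let r : ℝ := 3 * π / 5
    let s : ℝ := π / 5
    Matrix.PosDef
      !![1, -Real.cos r, -Real.cos p, -Real.cos q;
         -Real.cos r, 1, -Real.cos q, -Real.cos p;
         -Real.cos p, -Real.cos q, 1, -Real.cos s;
         -Real.cos q, -Real.cos p, -Real.cos s, (1 : ℝ)] := by
  intro p q r s
  have hc : 4 * cos (π / 5) ^ 2 - 2 * cos (π / 5) - 1 = 0 := quadratic_root_cos_pi_div_five
  have hq : cos q = 1 / 2 := cos_pi_div_three
  have hp : cos p = -(1 / 2) := by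
    have : p = π - π / 3 := by simp only [p]; ring
    rw [this, cos_pi_sub, cos_pi_div_three]
  have hr : cos r = 1 / 2 - cos (π / 5) := by
    have : r = π - 2 * (π / 5) := by simp only [r]; ring
    rw [this, cos_pi_sub, cos_two_mul]; linarith
  have h0 : 0 < cos (π / 5) := by rw [cos_pi_div_five]; positivity
  have h1 : cos (π / 5) < 1 := by nlinarith
  rw [hp, hq, hr]
  simp only [s]
  generalize cos (π / 5) = c at *
  apply Matrix.PosDef.of_dotProduct_mulVec_pos
  · ext i j
    fin_cases i <;> fin_cases j <;> simp
  · intro v hv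
    by_contra hn
    apply hv
    have := form_pos_aux c (v 0) (v 1) (v 2) (v 3) h0 h1 hc (by
      refine le_trans (le_of_eq ?_) (not_lt.1 hn)
      simp [Matrix.mulVec, dotProduct, Fin.sum_univ_four]
      ring)
    obtain ⟨a, b, d, e⟩ := this
    ext i
    fin_cases i <;> simpa
end

section
/- The 4×4 real symmetric matrix G with rows (1, −cos r, −cos p, −cos q), (−cos r, 1, −cos q, −cos p), (−cos p, −cos q, 1, −cos s), (−cos q, −cos p, −cos s, 1), where p = 5π/18, q = 2π/9, r = 13π/18, s = 11π/18, is positive definite. -/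
open Real

lemma aux_pos (A B c S T : ℝ) (hA : 0 < A) (h : c ^ 2 < A * B) (hne : S ≠ 0 ∨ T ≠ 0) :
    0 < A * S ^ 2 + B * T ^ 2 - 2 * c * (S * T) := by
  have key : A * (A * S ^ 2 + B * T ^ 2 - 2 * c * (S * T))
      = (A * S - c * T) ^ 2 + (A * B - c ^ 2) * T ^ 2 := by ring
  have : 0 < A * (A * S ^ 2 + B * T ^ 2 - 2 * c * (S * T)) := by
    rw [key]
    by_cases hT : T = 0
    · have hS : S ≠ 0 := by tauto
      subst hT
      have : 0 < (A * S) ^ 2 := by positivity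
      simpa using this
    · have : 0 < A * B - c ^ 2 := by linarith
      positivity
  exact pos_of_mul_pos_right this hA.le

lemma aux_nonneg (A B c S T : ℝ) (hA : 0 < A) (h : c ^ 2 < A * B) :
    0 ≤ A * S ^ 2 + B * T ^ 2 - 2 * c * (S * T) := by
  by_cases hne : S ≠ 0 ∨ T ≠ 0
  · exact (aux_pos A B c S T hA h hne).le
  · push Not at hne
    simp [hne.1, hne.2]

lemma bounds : ∃ u a q : ℝ, cos (5 * π / 18) = a ∧ cos (2 * π / 9) = q ∧
    cos (13 * π / 18) = -a ∧ cos (11 * π / 18) = -u ∧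
    0.33 < u ∧ u < 0.35 ∧ 0.635 < a ∧ a < 0.65 ∧ 0.76 < q ∧ q < 0.77 := by
  have h3 : cos (3 * (π / 9)) = 1 / 2 := by
    rw [← cos_pi_div_three]; congr 1; ring
  rw [cos_three_mul] at h3
  have hvpos : 1 / 2 < cos (π / 9) := by
    rw [← cos_pi_div_three]
    apply cos_lt_cos_of_nonneg_of_le_pi <;> linarith [pi_pos]
  have hupos : 0 < sin (π / 9) := sin_pos_of_pos_of_lt_pi (by positivity) (by linarith [pi_pos])
  have huv := sin_sq_add_cos_sq (π / 9)
  have hq : cos (2 * π / 9) = 2 * cos (π / 9) ^ 2 - 1 := by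
    rw [← cos_two_mul]; congr 1; ring
  have ha : cos (5 * π / 18) = 2 * sin (π / 9) * cos (π / 9) := by
    rw [← sin_two_mul, ← cos_pi_div_two_sub]; congr 1; ring
  have hr : cos (13 * π / 18) = -cos (5 * π / 18) := by
    rw [← cos_pi_sub]; congr 1; ring
  have hs : cos (11 * π / 18) = -sin (π / 9) := by
    rw [← cos_add_pi_div_two]; congr 1; ring
  generalize cos (π / 9) = v at *
  generalize sin (π / 9) = u at *
  have v1 : 0.9395 < v := by
    by_contra! h
    nlinarith [mul_nonneg (sub_nonneg.2 h) (sub_nonneg.2 hvpos.le), mul_nonneg (mul_nonneg (sub_nonneg.2 h) (sub_nonneg.2 hvpos.le)) (sub_nonneg.2 hvpos.le)]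
  have v2 : v < 0.94 := by
    by_contra! h
    nlinarith [mul_nonneg (sub_nonneg.2 h) (sub_nonneg.2 hvpos.le), mul_nonneg (mul_nonneg (sub_nonneg.2 h) (sub_nonneg.2 hvpos.le)) (sub_nonneg.2 hvpos.le)]
  have u1 : 0.34 < u := by nlinarith
  have u2 : u < 0.344 := by nlinarith
  refine ⟨u, _, _, rfl, rfl, hr, hs, by linarith, by linarith, ?_, ?_, ?_, ?_⟩
  · rw [ha]; nlinarith
  · rw [ha]; nlinarith
  · rw [hq]; nlinarith
  · rw [hq]; nlinarith

theorem gram_matrix_T_posDef :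
    let p : ℝ := 5 * π / 18
    let q : ℝ := 2 * π / 9
    let r : ℝ := 13 * π / 18
    let s : ℝ := 11 * π / 18
    Matrix.PosDef
      !![1, -Real.cos r, -Real.cos p, -Real.cos q;
         -Real.cos r, 1, -Real.cos q, -Real.cos p;
         -Real.cos p, -Real.cos q, 1, -Real.cos s;
         -Real.cos q, -Real.cos p, -Real.cos s, (1 : ℝ)] := by
  intro p q r s
  obtain ⟨u, a, b, hp, hq, hr, hs, u1, u2, a1, a2, b1, b2⟩ := bounds
  simp only [p, q, r, s, hp, hq, hr, hs]
  apply Matrix.PosDef.of_dotProduct_mulVec_pos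
  · ext i j
    fin_cases i <;> fin_cases j <;> simp
  · intro x hx
    have c1 : (a + b) ^ 2 < (1 + a) * (1 + u) := by nlinarith
    have c2 : (a - b) ^ 2 < (1 - a) * (1 - u) := by nlinarith
    have e : star x ⬝ᵥ (!![1, - -a, -a, -b; - -a, 1, -b, -a; -a, -b, 1, - -u; -b, -a, - -u, (1 : ℝ)].mulVec x)
      = (1 / 2) * (((1 + a) * (x 0 + x 1) ^ 2 + (1 + u) * (x 2 + x 3) ^ 2
          - 2 * (a + b) * ((x 0 + x 1) * (x 2 + x 3)))
        + ((1 - a) * (x 0 - x 1) ^ 2 + (1 - u) * (x 2 - x 3) ^ 2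
          - 2 * (a - b) * ((x 0 - x 1) * (x 2 - x 3)))) := by
      simp [Matrix.mulVec, dotProduct, Fin.sum_univ_four]
      ring
    rw [e]
    have n1 := aux_nonneg (1 + a) (1 + u) (a + b) (x 0 + x 1) (x 2 + x 3) (by linarith) c1
    have n2 := aux_nonneg (1 - a) (1 - u) (a - b) (x 0 - x 1) (x 2 - x 3) (by linarith) c2
    by_cases h1 : x 0 + x 1 ≠ 0 ∨ x 2 + x 3 ≠ 0
    · have := aux_pos (1 + a) (1 + u) (a + b) _ _ (by linarith) c1 h1
      linarith
    · by_cases h2 : x 0 - x 1 ≠ 0 ∨ x 2 - x 3 ≠ 0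
      · have := aux_pos (1 - a) (1 - u) (a - b) _ _ (by linarith) c2 h2
        linarith
      · exfalso
        push Not at h1 h2
        apply hx
        ext i
        fin_cases i <;> simp <;> linarith [h1.1, h1.2, h2.1, h2.2]
end

section
/- Let α = 5π/18, β = 2π/9, γ = 11π/18. Then each of the three quantities (cos γ + cos α · cos β)/(sin α · sin β), (cos β + cos α · cos γ)/(sin α · sin γ), and (cos α + cos β · cos γ)/(sin β · sin γ) lies strictly between 0 and cos(π/6) = √3/2. -/
open Real

set_option maxHeartbeats 2000000 in
theorem vertex_link_side_lengths :
    let α : ℝ := 5 * π / 18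
    let β : ℝ := 2 * π / 9
    let γ : ℝ := 11 * π / 18
    (0 < (Real.cos γ + Real.cos α * Real.cos β) / (Real.sin α * Real.sin β) ∧
      (Real.cos γ + Real.cos α * Real.cos β) / (Real.sin α * Real.sin β) < Real.cos (π / 6)) ∧
    (0 < (Real.cos β + Real.cos α * Real.cos γ) / (Real.sin α * Real.sin γ) ∧
      (Real.cos β + Real.cos α * Real.cos γ) / (Real.sin α * Real.sin γ) < Real.cos (π / 6)) ∧
    (0 < (Real.cos α + Real.cos β * Real.cos γ) / (Real.sin β * Real.sin γ) ∧
      (Real.cos α + Real.cos β * Real.cos γ) / (Real.sin β * Real.sin γ) < Real.cos (π / 6)) ∧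
    Real.cos (π / 6) = Real.sqrt 3 / 2 := by
  intro α β γ
  have hpi := Real.pi_pos
  obtain ⟨s, hs⟩ : ∃ s, s = Real.sin (π / 9) := ⟨_, rfl⟩
  obtain ⟨c, hc⟩ : ∃ c, c = Real.cos (π / 9) := ⟨_, rfl⟩
  obtain ⟨S, hS⟩ : ∃ S, S = Real.sin β := ⟨_, rfl⟩
  obtain ⟨C, hC⟩ : ∃ C, C = Real.cos β := ⟨_, rfl⟩
  have e1 : Real.cos α = S := by
    rw [hS, ← Real.cos_pi_div_two_sub]; congr 1; simp only [α, β]; ring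
  have e2 : Real.sin α = C := by
    rw [hC, ← Real.sin_pi_div_two_sub]; congr 1; simp only [α, β]; ring
  have e3 : Real.cos γ = -s := by
    rw [hs, ← Real.cos_add_pi_div_two]; congr 1; simp only [γ]; ring
  have e4 : Real.sin γ = c := by
    rw [hc, ← Real.sin_add_pi_div_two]; congr 1; simp only [γ]; ring
  have hb : β = 2 * (π / 9) := by simp only [β]; ring
  have S2 : S = 2 * s * c := by rw [hS, hb, Real.sin_two_mul, hs, hc]
  have hsc : s ^ 2 + c ^ 2 = 1 := by rw [hs, hc]; exact Real.sin_sq_add_cos_sq _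
  have C2 : C = 1 - 2 * s ^ 2 := by
    rw [hC, hb, Real.cos_two_mul, ← hc]; linarith
  have h3 : 3 * s - 4 * s ^ 3 = √3 / 2 := by
    rw [hs, ← Real.sin_three_mul, ← Real.sin_pi_div_three]; congr 1; ring
  have s0 : 0 < s := by rw [hs]; apply Real.sin_pos_of_pos_of_lt_pi <;> linarith
  have c0 : 0 < c := by rw [hc]; apply Real.cos_pos_of_mem_Ioo; constructor <;> linarith
  have sh : s < 1 / 2 := by
    rw [hs, ← Real.sin_pi_div_six]
    apply Real.sin_lt_sin_of_lt_of_le_pi_div_two <;> linarith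
  have r1 : (1.732 : ℝ) < √3 := by apply Real.lt_sqrt_of_sq_lt; norm_num
  have r2 : √3 < (1.733 : ℝ) := by rw [Real.sqrt_lt' (by norm_num)]; norm_num
  have s1 : 0.34 < s := by
    by_contra h
    push Not at h
    nlinarith [mul_nonneg (sub_nonneg.2 h) (by nlinarith : 0 ≤ 3 - 4 * (s ^ 2 + 0.34 * s + 0.34 ^ 2))]
  have s2 : s < 0.344 := by
    by_contra h
    push Not at h
    nlinarith [mul_nonneg (sub_nonneg.2 h) (by nlinarith : 0 ≤ 3 - 4 * (s ^ 2 + 0.344 * s + 0.344 ^ 2))]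
  have c1 : 0.938 < c := by nlinarith
  have c2 : c < 0.941 := by nlinarith
  have S1 : 0.637 < S := by nlinarith
  have S3 : S < 0.648 := by nlinarith
  have C1 : 0.763 < C := by nlinarith
  have C3 : C < 0.769 := by nlinarith
  have S0 : 0 < S := by linarith
  have C0 : 0 < C := by linarith
  clear_value α β γ
  rw [e1, e2, e3, e4, ← hS, ← hC, Real.cos_pi_div_six]
  have hr : (0.866 : ℝ) < √3 / 2 := by linarith
  have key : ∀ x d : ℝ, 0 < d → 0 < x → x < 0.866 * d → 0 < x / d ∧ x / d < √3 / 2 := by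
    intro x d hd hx h
    exact ⟨div_pos hx hd, lt_trans ((div_lt_iff₀ hd).2 h) hr⟩
  refine ⟨key _ _ (by positivity) ?_ ?_, key _ _ (by positivity) ?_ ?_,
    key _ _ (by positivity) ?_ ?_, rfl⟩ <;> nlinarith
end

section
/- cos²(2π/3) + cos²(3π/5) + cos²(4π/5) = 1. -/
open Real

theorem lambert_cube_relation :
    Real.cos (2 * π / 3) ^ 2 + Real.cos (3 * π / 5) ^ 2 + Real.cos (4 * π / 5) ^ 2 = 1 := by
  have hq : 4 * Real.cos (π / 5) ^ 2 - 2 * Real.cos (π / 5) - 1 = 0 :=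
    Real.quadratic_root_cos_pi_div_five
  have h1 : Real.cos (2 * π / 3) = -(1 / 2) := by
    rw [show 2 * π / 3 = π - π / 3 by ring, Real.cos_pi_sub, Real.cos_pi_div_three]
  have h2 : Real.cos (3 * π / 5) = 1 / 2 - Real.cos (π / 5) := by
    rw [show 3 * π / 5 = π - 2 * (π / 5) by ring, Real.cos_pi_sub, Real.cos_two_mul]
    linarith
  have h3 : Real.cos (4 * π / 5) = -Real.cos (π / 5) := by
    rw [show 4 * π / 5 = π - π / 5 by ring, Real.cos_pi_sub]
  rw [h1, h2, h3]
  linarith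
end

section
/- Let a, b, c be rational multiples of π with π/2 < a, b, c < π and cos²a + cos²b + cos²c = 1. Then, up to a permutation of (a, b, c), either (a, b, c) = (3π/4, 2π/3, 2π/3) or (a, b, c) = (2π/3, 3π/5, 4π/5). -/
open Real

open Polynomial in
theorem nextCoeff_cyclo (n : ℕ) (hn : 0 < n) :
    (cyclotomic n ℚ).nextCoeff = -((ArithmeticFunction.moebius n : ℤ) : ℚ) := by
  induction n using Nat.strong_induction_on with
  | _ n ih =>
  have h1 : ∑ d ∈ n.divisors, (cyclotomic d ℚ).nextCoeff = (X ^ n - 1 : ℚ[X]).nextCoeff := by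
    rw [← prod_cyclotomic_eq_X_pow_sub_one hn,
      Monic.nextCoeff_prod _ _ (fun i _ => cyclotomic.monic i ℚ)]
  have h2 : (X ^ n - 1 : ℚ[X]).nextCoeff = -(if n = 1 then 1 else 0) := by
    have hd : (X ^ n - 1 : ℚ[X]).natDegree = n := by
      have := natDegree_X_pow_sub_C (R := ℚ) (n := n) (r := 1)
      simpa using this
    rw [nextCoeff_of_natDegree_pos (by omega), hd]
    rw [coeff_sub, coeff_X_pow, coeff_one]
    have : ¬ (n - 1 = n) := by omega
    have h3 : (n - 1 = 0) ↔ n = 1 := by omega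
    by_cases h : n = 1 <;> simp [this, h3, h]
  have h4 : ∑ d ∈ n.divisors, ((ArithmeticFunction.moebius d : ℤ) : ℚ) = if n = 1 then 1 else 0 := by
    have h := congrArg (fun f => f n) (ArithmeticFunction.coe_zeta_mul_coe_moebius (R := ℚ))
    simp only [ArithmeticFunction.coe_zeta_mul_apply, ArithmeticFunction.one_apply,
      ArithmeticFunction.intCoe_apply] at h
    exact h
  rw [h2, ← h4, ← Nat.insert_self_properDivisors hn.ne', Finset.sum_insert (by simp),
    Finset.sum_insert (by simp)] at h1
  have h5 : ∑ d ∈ n.properDivisors, (cyclotomic d ℚ).nextCoeff =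
      -∑ d ∈ n.properDivisors, ((ArithmeticFunction.moebius d : ℤ) : ℚ) := by
    rw [← Finset.sum_neg_distrib]
    refine Finset.sum_congr rfl fun d hd => ?_
    have := Nat.mem_properDivisors.1 hd
    exact ih d this.2 (Nat.pos_of_dvd_of_pos this.1 hn)
  linarith

noncomputable def mval (n : ℕ) : ℚ := (ArithmeticFunction.moebius n : ℤ) / (n.totient : ℚ)

theorem ntrace_root {K : Type*} [Field K] [Algebra ℚ K] [Algebra.IsIntegral ℚ K] [CharZero K]
    (z : K) (n : ℕ) (hn : 0 < n) (hz : IsPrimitiveRoot z n) :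
    Algebra.normalizedTrace ℚ K z = mval n := by
  rename_i i1 i2 i3 i4
  obtain rfl : i2 = DivisionRing.toRatAlgebra := Subsingleton.elim _ _
  rw [Algebra.normalizedTrace_minpoly, ← Polynomial.cyclotomic_eq_minpoly_rat hz hn,
    nextCoeff_cyclo n hn, Polynomial.natDegree_cyclotomic, mval]
  simp [div_eq_inv_mul]

theorem mval_cases (n : ℕ) (hn : 3 ≤ n) :
    (n = 3 ∧ mval n = -1/2) ∨ (n = 5 ∧ mval n = -1/4) ∨ (n ≠ 3 ∧ n ≠ 5 ∧ -1/4 < mval n) := by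
  have hφ : 0 < n.totient := Nat.totient_pos.2 (by omega)
  have hφ' : (0:ℚ) < n.totient := by exact_mod_cast hφ
  by_cases h3 : n = 3
  · left
    refine ⟨h3, ?_⟩
    rw [h3, mval, ArithmeticFunction.moebius_apply_prime Nat.prime_three,
      Nat.totient_prime Nat.prime_three]
    norm_num
  by_cases h5 : n = 5
  · right; left
    refine ⟨h5, ?_⟩
    rw [h5, mval, ArithmeticFunction.moebius_apply_prime Nat.prime_five,
      Nat.totient_prime Nat.prime_five]
    norm_num
  right; right
  refine ⟨h3, h5, ?_⟩
  rw [mval, lt_div_iff₀ hφ']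
  have habs : |ArithmeticFunction.moebius n| ≤ 1 := ArithmeticFunction.abs_moebius_le_one
  have hge := (abs_le.1 habs).1
  by_cases h0 : 0 ≤ ArithmeticFunction.moebius n
  · have : (0:ℚ) ≤ (ArithmeticFunction.moebius n : ℤ) := by exact_mod_cast h0
    linarith
  have hm : ArithmeticFunction.moebius n = -1 := by omega
  by_cases h4 : 5 ≤ n.totient
  · have : (5:ℚ) ≤ n.totient := by exact_mod_cast h4
    rw [hm]; push_cast; linarith
  exfalso
  have hsq : Squarefree n := ArithmeticFunction.moebius_ne_zero_iff_squarefree.1 (by omega)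
  have hdvd : n ∣ 30 := by
    rw [← Nat.prod_primeFactors_of_squarefree hsq]
    have hsub : n.primeFactors ⊆ ({2, 3, 5} : Finset ℕ) := by
      intro p hp
      have hpp := Nat.prime_of_mem_primeFactors hp
      have h := Nat.le_of_dvd hφ (Nat.totient_dvd_of_dvd (Nat.dvd_of_mem_primeFactors hp))
      rw [Nat.totient_prime hpp] at h
      have : p ≤ 5 := by omega
      interval_cases p <;> first | (exfalso; revert hpp; norm_num; done) | simp
    exact (Finset.prod_dvd_prod_of_subset _ _ (fun p => p) hsub).trans (by decide)
  have hmem : n ∈ Nat.divisors 30 := by simp [hdvd]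
  have hd : Nat.divisors 30 = {1, 2, 3, 5, 6, 10, 15, 30} := by decide
  rw [hd] at hmem
  have h6 : ArithmeticFunction.moebius 6 = 1 := by
    rw [show 6 = 2 * 3 by rfl, ArithmeticFunction.isMultiplicative_moebius.map_mul_of_coprime (by norm_num),
      ArithmeticFunction.moebius_apply_prime Nat.prime_two,
      ArithmeticFunction.moebius_apply_prime Nat.prime_three]; rfl
  have h10 : ArithmeticFunction.moebius 10 = 1 := by
    rw [show 10 = 2 * 5 by rfl, ArithmeticFunction.isMultiplicative_moebius.map_mul_of_coprime (by norm_num),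
      ArithmeticFunction.moebius_apply_prime Nat.prime_two,
      ArithmeticFunction.moebius_apply_prime Nat.prime_five]; rfl
  have t15 : Nat.totient 15 = 8 := by decide
  have t30 : Nat.totient 30 = 8 := by decide
  simp only [Finset.mem_insert, Finset.mem_singleton] at hmem
  rcases hmem with h | h | h | h | h | h | h | h <;> subst h <;> omega

theorem exists_root (q : ℚ) : ∃ z : algebraicClosure ℚ ℂ, IsPrimitiveRoot z q.den ∧
    (z : ℂ) + ((z⁻¹ : algebraicClosure ℚ ℂ) : ℂ) = ((4 * Real.cos (q * π) ^ 2 - 2 : ℝ) : ℂ) := by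
  have hp := Complex.isPrimitiveRoot_exp_rat q
  set w := Complex.exp (2 * π * Complex.I * q) with hw
  have hint : IsIntegral ℚ w := by
    refine (hp.isIntegral q.pos).tower_top
  refine ⟨⟨w, (mem_algebraicClosure_iff).2 hint.isAlgebraic⟩, ?_, ?_⟩
  · apply IsPrimitiveRoot.of_map_of_injective (f := (algebraicClosure ℚ ℂ).val) (hf := Subtype.val_injective)
    exact hp
  · simp only [IntermediateField.coe_inv]
    rw [hw, ← Complex.exp_neg]
    have h : 4 * Real.cos (q * π) ^ 2 - 2 = 2 * Real.cos (2 * (q * π)) := by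
      rw [Real.cos_two_mul]; ring
    rw [h]; push_cast
    rw [Complex.two_cos]
    congr 2 <;> ring

theorem isIntegral_swap {K : Type*} [Field K] (i j : Algebra ℚ K)
    (h : @Algebra.IsIntegral ℚ K _ _ i) : @Algebra.IsIntegral ℚ K _ _ j := by
  obtain rfl : i = j := Subsingleton.elim _ _
  exact h

theorem mval_sum (p q r : ℚ) (h : Real.cos (p * π) ^ 2 + Real.cos (q * π) ^ 2 + Real.cos (r * π) ^ 2 = 1) :
    mval p.den + mval q.den + mval r.den = -1 := by
  obtain ⟨x, hx, hx'⟩ := exists_root p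
  obtain ⟨y, hy, hy'⟩ := exists_root q
  obtain ⟨z, hz, hz'⟩ := exists_root r
  have key : (x + x⁻¹) + (y + y⁻¹) + (z + z⁻¹) = algebraMap ℚ (algebraicClosure ℚ ℂ) (-2) := by
    apply Subtype.val_injective
    change ((x : ℂ) + ((x⁻¹ : algebraicClosure ℚ ℂ) : ℂ)) + ((y : ℂ) + ((y⁻¹ : algebraicClosure ℚ ℂ) : ℂ)) +
      ((z : ℂ) + ((z⁻¹ : algebraicClosure ℚ ℂ) : ℂ)) = algebraMap ℚ ℂ (-2)
    rw [hx', hy', hz']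
    rw [← Complex.ofReal_add, ← Complex.ofReal_add]
    have : (4 * Real.cos (p * π) ^ 2 - 2) + (4 * Real.cos (q * π) ^ 2 - 2) +
      (4 * Real.cos (r * π) ^ 2 - 2) = -2 := by linarith
    rw [this]; simp
  have : Algebra.IsIntegral ℚ (algebraicClosure ℚ ℂ) := by
    have h := (algebraicClosure.isAlgebraic ℚ ℂ).isIntegral
    exact isIntegral_swap _ _ h
  have := congrArg (Algebra.normalizedTrace ℚ (algebraicClosure ℚ ℂ)) key
  rw [Algebra.normalizedTrace_algebraMap_apply, Algebra.normalizedTrace_self_apply] at this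
  simp only [map_add] at this
  rw [ntrace_root x _ p.pos hx, ntrace_root y _ q.pos hy, ntrace_root z _ r.pos hz,
    ntrace_root _ _ p.pos hx.inv, ntrace_root _ _ q.pos hy.inv, ntrace_root _ _ r.pos hz.inv] at this
  linarith

theorem rat_den (q : ℚ) (h1 : 1/2 < q) (h2 : q < 1) : 3 ≤ q.den ∧ (q.den = 3 → q = 2/3) ∧
    (q.den = 5 → q = 3/5 ∨ q = 4/5) := by
  have hq := Rat.num_div_den q
  have hp : (0:ℚ) < q.den := by exact_mod_cast q.pos
  rw [← hq, lt_div_iff₀ hp] at h1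
  rw [← hq, div_lt_one hp] at h2
  have h1' : (q.den : ℤ) < 2 * q.num := by
    have : (q.den : ℚ) < 2 * q.num := by linarith
    exact_mod_cast this
  have h2' : q.num < q.den := by exact_mod_cast h2
  have := q.pos
  refine ⟨by omega, fun h => ?_, fun h => ?_⟩
  · have : q.num = 2 := by omega
    rw [← hq, h, this]; norm_num
  · have : q.num = 3 ∨ q.num = 4 := by omega
    rcases this with h' | h'
    · left; rw [← hq, h, h']; norm_num
    · right; rw [← hq, h, h']; norm_num

theorem cos_sq_inj {a b : ℝ} (ha1 : π / 2 < a) (ha2 : a < π) (hb1 : π / 2 < b) (hb2 : b < π)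
    (h : Real.cos a ^ 2 = Real.cos b ^ 2) : a = b := by
  have h1 := Real.cos_neg_of_pi_div_two_lt_of_lt ha1 (by linarith [Real.pi_pos])
  have h2 := Real.cos_neg_of_pi_div_two_lt_of_lt hb1 (by linarith [Real.pi_pos])
  apply Real.injOn_cos ⟨by linarith [Real.pi_pos], ha2.le⟩ ⟨by linarith [Real.pi_pos], hb2.le⟩
  nlinarith

theorem cs23 : Real.cos (2 * π / 3) ^ 2 = 1 / 4 := by
  rw [show 2 * π / 3 = π - π / 3 by ring, Real.cos_pi_sub, Real.cos_pi_div_three]; norm_num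

theorem cs34 : Real.cos (3 * π / 4) ^ 2 = 1 / 2 := by
  rw [show 3 * π / 4 = π - π / 4 by ring, Real.cos_pi_sub, Real.cos_pi_div_four]
  rw [neg_sq, div_pow, Real.sq_sqrt (by norm_num)]; norm_num

theorem cs45 : Real.cos (4 * π / 5) ^ 2 = (3 + √5) / 8 := by
  rw [show 4 * π / 5 = π - π / 5 by ring, Real.cos_pi_sub, Real.cos_pi_div_five]
  have : √5 ^ 2 = 5 := Real.sq_sqrt (by norm_num)
  linear_combination this / 16

theorem cs35 : Real.cos (3 * π / 5) ^ 2 = (3 - √5) / 8 := by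
  rw [show 3 * π / 5 = π - 2 * (π / 5) by ring, Real.cos_pi_sub, Real.cos_two_mul, Real.cos_pi_div_five]
  have : √5 ^ 2 = 5 := Real.sq_sqrt (by norm_num)
  linear_combination (√5 ^ 2 + 4 * √5 - 5) / 64 * this

theorem core (q r : ℚ) (b c : ℝ) (hb : b = q * π) (hc : c = r * π)
    (hb1 : π / 2 < b) (hb2 : b < π) (hc1 : π / 2 < c) (hc2 : c < π)
    (hq1 : 1/2 < q) (hq2 : q < 1) (hr1 : 1/2 < r) (hr2 : r < 1)
    (heq : Real.cos b ^ 2 + Real.cos c ^ 2 = 3 / 4)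
    (hm : mval q.den + mval r.den = -1/2) :
    (b = 2 * π / 3 ∧ c = 3 * π / 4) ∨ (c = 2 * π / 3 ∧ b = 3 * π / 4) ∨
    (b = 3 * π / 5 ∧ c = 4 * π / 5) ∨ (b = 4 * π / 5 ∧ c = 3 * π / 5) := by
  obtain ⟨q3, hq3, hq5⟩ := rat_den q hq1 hq2
  obtain ⟨r3, hr3, hr5⟩ := rat_den r hr1 hr2
  have hpi := Real.pi_pos
  have h5 : 0 < √5 := Real.sqrt_pos.2 (by norm_num)
  rcases mval_cases _ q3 with ⟨h, hv⟩ | ⟨h, hv⟩ | ⟨-, -, hv⟩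
  · left
    have hb' : b = 2 * π / 3 := by rw [hb, hq3 h]; push_cast; ring
    refine ⟨hb', cos_sq_inj hc1 hc2 (by linarith) (by linarith) ?_⟩
    rw [hb', cs23] at heq
    rw [cs34]; linarith
  · rcases mval_cases _ r3 with ⟨h', hv'⟩ | ⟨h', hv'⟩ | ⟨-, -, hv'⟩
    · linarith
    · right; right
      rcases hq5 h with e | e <;> rcases hr5 h' with e' | e' <;> rw [e] at hb <;> rw [e'] at hc <;>
        push_cast at hb hc
      · rw [hb, hc, show (3:ℝ) / 5 * π = 3 * π / 5 by ring, cs35] at heq; linarith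
      · left; exact ⟨by linarith, by linarith⟩
      · right; exact ⟨by linarith, by linarith⟩
      · rw [hb, hc, show (4:ℝ) / 5 * π = 4 * π / 5 by ring, cs45] at heq; linarith
    · linarith
  · rcases mval_cases _ r3 with ⟨h', hv'⟩ | ⟨h', hv'⟩ | ⟨-, -, hv'⟩
    · right; left
      have hc' : c = 2 * π / 3 := by rw [hc, hr3 h']; push_cast; ring
      refine ⟨hc', cos_sq_inj hb1 hb2 (by linarith) (by linarith) ?_⟩
      rw [hc', cs23] at heq
      rw [cs34]; linarith
    · linarith
    · linarith

theorem core2 (p q r : ℚ) (a b c : ℝ) (ha : a = p * π) (hb : b = q * π) (hc : c = r * π)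
    (hb1 : π / 2 < b) (hb2 : b < π) (hc1 : π / 2 < c) (hc2 : c < π)
    (hp1 : 1/2 < p) (hp2 : p < 1)
    (hq1 : 1/2 < q) (hq2 : q < 1) (hr1 : 1/2 < r) (hr2 : r < 1)
    (heq : Real.cos a ^ 2 + Real.cos b ^ 2 + Real.cos c ^ 2 = 1)
    (hm : mval p.den + mval q.den + mval r.den = -1) (h3 : p.den = 3) (hv : mval p.den = -1/2) :
    ({a, b, c} : Multiset ℝ) = {3 * π / 4, 2 * π / 3, 2 * π / 3} ∨
      ({a, b, c} : Multiset ℝ) = {2 * π / 3, 3 * π / 5, 4 * π / 5} := by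
  have ha' : a = 2 * π / 3 := by rw [ha, (rat_den p hp1 hp2).2.1 h3]; push_cast; ring
  rw [ha', cs23] at heq
  rcases core q r b c hb hc hb1 hb2 hc1 hc2 hq1 hq2 hr1 hr2 (by linarith) (by linarith) with
    ⟨e, e'⟩ | ⟨e, e'⟩ | ⟨e, e'⟩ | ⟨e, e'⟩ <;> rw [ha', e, e']
  · left
    simp only [Multiset.insert_eq_cons, ← Multiset.singleton_add]; abel
  · left
    simp only [Multiset.insert_eq_cons, ← Multiset.singleton_add]; abel
  · right; rfl
  · right
    simp only [Multiset.insert_eq_cons, ← Multiset.singleton_add]; abel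

theorem rat_bound (q : ℚ) (h1 : π / 2 < q * π) (h2 : q * π < π) : 1/2 < q ∧ q < 1 := by
  have hpi := Real.pi_pos
  constructor
  · have : (1/2 : ℝ) < q := by nlinarith
    have h : ((1/2 : ℚ) : ℝ) < q := by push_cast; exact this
    exact_mod_cast h
  · have : (q : ℝ) < 1 := by nlinarith
    exact_mod_cast this

theorem rational_lambert_cubes_classification
    (a b c : ℝ)
    (ha : ∃ q : ℚ, a = q * π) (hb : ∃ q : ℚ, b = q * π) (hc : ∃ q : ℚ, c = q * π)
    (ha1 : π / 2 < a) (ha2 : a < π)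
    (hb1 : π / 2 < b) (hb2 : b < π)
    (hc1 : π / 2 < c) (hc2 : c < π)
    (heq : Real.cos a ^ 2 + Real.cos b ^ 2 + Real.cos c ^ 2 = 1) :
    ({a, b, c} : Multiset ℝ) = {3 * π / 4, 2 * π / 3, 2 * π / 3} ∨
      ({a, b, c} : Multiset ℝ) = {2 * π / 3, 3 * π / 5, 4 * π / 5} := by
  obtain ⟨p, ha⟩ := ha
  obtain ⟨q, hb⟩ := hb
  obtain ⟨r, hc⟩ := hc
  obtain ⟨hp1, hp2⟩ := rat_bound p (ha ▸ ha1) (ha ▸ ha2)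
  obtain ⟨hq1, hq2⟩ := rat_bound q (hb ▸ hb1) (hb ▸ hb2)
  obtain ⟨hr1, hr2⟩ := rat_bound r (hc ▸ hc1) (hc ▸ hc2)
  have hm := mval_sum p q r (by rw [← ha, ← hb, ← hc]; exact heq)
  rcases mval_cases _ (rat_den p hp1 hp2).1 with ⟨h3, hv⟩ | hP
  · exact core2 p q r a b c ha hb hc hb1 hb2 hc1 hc2 hp1 hp2 hq1 hq2 hr1 hr2 heq hm h3 hv
  rcases mval_cases _ (rat_den q hq1 hq2).1 with ⟨h3, hv⟩ | hQ
  · have := core2 q p r b a c hb ha hc ha1 ha2 hc1 hc2 hq1 hq2 hp1 hp2 hr1 hr2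
      (by linarith) (by linarith) h3 hv
    rwa [show ({a, b, c} : Multiset ℝ) = {b, a, c} from Multiset.cons_swap _ _ _]
  rcases mval_cases _ (rat_den r hr1 hr2).1 with ⟨h3, hv⟩ | hR
  · have := core2 r p q c a b hc ha hb ha1 ha2 hb1 hb2 hr1 hr2 hp1 hp2 hq1 hq2
      (by linarith) (by linarith) h3 hv
    rwa [show ({a, b, c} : Multiset ℝ) = {c, a, b} by
      simp only [Multiset.insert_eq_cons, ← Multiset.singleton_add]; abel]
  exfalso
  have e1 : -1/4 ≤ mval p.den := by rcases hP with h | h; exacts [h.2.ge, h.2.2.le]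
  have e2 : -1/4 ≤ mval q.den := by rcases hQ with h | h; exacts [h.2.ge, h.2.2.le]
  have e3 : -1/4 ≤ mval r.den := by rcases hR with h | h; exacts [h.2.ge, h.2.2.le]
  linarith
end
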